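/- Let A be any C*-algebra. Then LM(A) = M(A) if and only if QM(A) = M(A); that is, every bounded left centralizer of A is a multiplier (for every continuous linear map L : A → A with L(x·y) = L(x)·y for all x, y there exists a continuous linear map R : A → A with R(x)·y = x·L(y) for all x, y) if and only if every quasi-centralizer of A comes from a multiplier. -/

import Mathlib

/-!
Think of a quasi-centralizer `m` as `m x y = x Q y` with `Q` in the bidual `A**`. If every left
centralizer is a multiplier then, taking adjoints, so is every right centralizer. For fixed `c`
the map `x ↦ m x c`, that is `Qc`, is a right centralizer, hence `Q c b ∈ A` for all `b`. Letting
`b` run through an approximate unit gives `Q c ∈ A` because `A` is norm closed, so `Q` is a left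
centralizer, and one more application of the hypothesis makes it a multiplier.

The bidual is avoided by expressing `Q y ∈ A` as `m.flip y` lying in the range of `u ↦ (x ↦ x * u)`,
which is closed because a bounded approximate unit makes this map bounded below.
Conversely, for a left centralizer `L`, apply `QM(A) = M(A)` to `m x y = x * L y`.
-/

/-- A quasi-centralizer of `A`: a continuous bilinear map `m : A × A → A` satisfying
`m (a*x) (y*b) = a * m x y * b` for all `a x y b`. -/
def IsQuasiCentralizer {A : Type*} [NonUnitalNormedRing A] [NormedSpace ℂ A]
    (m : A →L[ℂ] A →L[ℂ] A) : Prop :=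
  ∀ a x y b : A, m (a * x) (y * b) = a * m x y * b

/-- The quasi-centralizer `m` comes from a multiplier, i.e. there is a double centralizer
`(L, R)` of `A` with `m x y = x * L y`. -/
def ComesFromMultiplier {A : Type*} [NonUnitalNormedRing A] [NormedSpace ℂ A]
    (m : A →L[ℂ] A →L[ℂ] A) : Prop :=
  ∃ L R : A →L[ℂ] A, (∀ x y : A, R x * y = x * L y) ∧ ∀ x y : A, m x y = x * L y

/-- `QM(A) = M(A)`: every quasi-centralizer of `A` comes from a multiplier. -/
def QMeqM (A : Type*) [NonUnitalNormedRing A] [NormedSpace ℂ A] : Prop :=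
  ∀ m : A →L[ℂ] A →L[ℂ] A, IsQuasiCentralizer m → ComesFromMultiplier m

open Filter Topology
open scoped NNReal

/-- `LM(A) = M(A)`: every bounded left centralizer of `A` is the left component of a double
centralizer. -/
def LMeqM (A : Type*) [NonUnitalNormedRing A] [NormedSpace ℂ A] : Prop :=
  ∀ L : A →L[ℂ] A, (∀ x y : A, L (x * y) = L x * y) →
    ∃ R : A →L[ℂ] A, ∀ x y : A, R x * y = x * L y

/-- `RM(A) = M(A)`: every bounded right centralizer of `A` is the right component of a double
centralizer. -/
def RMeqM (A : Type*) [NonUnitalNormedRing A] [NormedSpace ℂ A] : Prop :=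
  ∀ R : A →L[ℂ] A, (∀ x y : A, R (x * y) = x * R y) →
    ∃ L : A →L[ℂ] A, ∀ x y : A, R x * y = x * L y

theorem exists_comp_eq_of_range_subset {𝕜 E F G : Type*} [NontriviallyNormedField 𝕜]
    [NormedAddCommGroup E] [NormedSpace 𝕜 E] [CompleteSpace E]
    [NormedAddCommGroup G] [NormedSpace 𝕜 G] [CompleteSpace G]
    [AddCommMonoid F] [Module 𝕜 F] [TopologicalSpace F]
    {f : E →L[𝕜] G} (hinj : Function.Injective f) (hclosed : IsClosed (Set.range f))
    {g : F →L[𝕜] G} (hg : Set.range g ⊆ Set.range f) : ∃ k : F →L[𝕜] E, f ∘L k = g := by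
  let e := f.equivRange hinj hclosed
  let g' : F →L[𝕜] f.range := g.codRestrict f.range fun y => hg ⟨y, rfl⟩
  refine ⟨(e.symm : f.range →L[𝕜] E) ∘L g', ContinuousLinearMap.ext fun y => ?_⟩
  exact congrArg Subtype.val (e.apply_symm_apply (g' y))

theorem antilipschitzWith_mul_flip {𝕜 A : Type*} [NontriviallyNormedField 𝕜]
    [NonUnitalSeminormedRing A] [NormedSpace 𝕜 A] [IsScalarTower 𝕜 A A] [SMulCommClass 𝕜 A A]
    {l : Filter A} (hl : l.IsApproximateUnit) {K : ℝ≥0} (hK : ∀ᶠ e in l, ‖e‖ ≤ K) :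
    AntilipschitzWith K (ContinuousLinearMap.mul 𝕜 A).flip := by
  have := hl.neBot
  refine ContinuousLinearMap.antilipschitz_of_bound _ fun u =>
    le_of_tendsto (hl.tendsto_mul_right u).norm ?_
  filter_upwards [hK] with e he
  calc ‖e * u‖ ≤ ‖(ContinuousLinearMap.mul 𝕜 A).flip u‖ * ‖e‖ :=
        ((ContinuousLinearMap.mul 𝕜 A).flip u).le_opNorm e
    _ ≤ K * ‖(ContinuousLinearMap.mul 𝕜 A).flip u‖ := by
        rw [mul_comm]
        gcongr

namespace IsQuasiCentralizer

variable {A : Type*} [NonUnitalNormedRing A] [NormedSpace ℂ A] {l : Filter A}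
  {m : A →L[ℂ] A →L[ℂ] A}

theorem map_mul_left (hm : IsQuasiCentralizer m) (hl : l.IsApproximateUnit) (a x y : A) :
    m (a * x) y = a * m x y := by
  have := hl.neBot
  have hlim : Tendsto (fun e => m (a * x) (y * e)) l (𝓝 (m (a * x) y)) :=
    ((m (a * x)).continuous.tendsto y).comp (hl.tendsto_mul_left y)
  exact tendsto_nhds_unique hlim <|
    (hl.tendsto_mul_left (a * m x y)).congr fun e => (hm a x y e).symm

theorem map_mul_right (hm : IsQuasiCentralizer m) (hl : l.IsApproximateUnit) (x y b : A) :
    m x (y * b) = m x y * b := by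
  have := hl.neBot
  have hlim : Tendsto (fun e => m (e * x) (y * b)) l (𝓝 (m x (y * b))) :=
    ((m.flip (y * b)).continuous.tendsto x).comp (hl.tendsto_mul_right x)
  exact tendsto_nhds_unique hlim <| (hl.tendsto_mul_right (m x y * b)).congr fun e => by
    rw [hm e x y b, mul_assoc]

variable [IsScalarTower ℂ A A] [SMulCommClass ℂ A A]

theorem flip_mul_mem_range (hm : IsQuasiCentralizer m) (hl : l.IsApproximateUnit)
    (hA : RMeqM A) (c b : A) :
    m.flip (c * b) ∈ Set.range (ContinuousLinearMap.mul ℂ A).flip := by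
  obtain ⟨L, hL⟩ := hA (m.flip c) fun x y => hm.map_mul_left hl x y c
  refine ⟨L b, ContinuousLinearMap.ext fun x => ?_⟩
  calc x * L b = m x c * b := (hL x b).symm
    _ = m x (c * b) := (hm.map_mul_right hl x c b).symm

variable [CompleteSpace A] {K : ℝ≥0}

theorem exists_eq_mul_apply (hm : IsQuasiCentralizer m) (hl : l.IsApproximateUnit)
    (hK : ∀ᶠ e in l, ‖e‖ ≤ K) (hA : RMeqM A) :
    ∃ L : A →L[ℂ] A, ∀ x y : A, m x y = x * L y := by
  have := hl.neBot
  have hanti := antilipschitzWith_mul_flip (𝕜 := ℂ) hl hK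
  have hclosed := hanti.isClosed_range (ContinuousLinearMap.mul ℂ A).flip.uniformContinuous
  have hmem (y : A) : m.flip y ∈ Set.range (ContinuousLinearMap.mul ℂ A).flip :=
    hclosed.mem_of_tendsto ((m.flip.continuous.tendsto y).comp (hl.tendsto_mul_left y))
      (.of_forall fun e => hm.flip_mul_mem_range hl hA y e)
  obtain ⟨L, hL⟩ := exists_comp_eq_of_range_subset hanti.injective hclosed
    (Set.range_subset_iff.mpr hmem)
  exact ⟨L, fun x y => (DFunLike.congr_fun (DFunLike.congr_fun hL y) x).symm⟩

theorem comesFromMultiplier (hm : IsQuasiCentralizer m) (hl : l.IsApproximateUnit)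
    (hK : ∀ᶠ e in l, ‖e‖ ≤ K) (hLM : LMeqM A) (hRM : RMeqM A) : ComesFromMultiplier m := by
  obtain ⟨L, hL⟩ := hm.exists_eq_mul_apply hl hK hRM
  have hLmul (y z : A) : L (y * z) = L y * z := by
    apply (antilipschitzWith_mul_flip (𝕜 := ℂ) hl hK).injective
    ext x
    calc x * L (y * z) = m x y * z := by rw [← hL, hm.map_mul_right hl]
      _ = x * (L y * z) := by rw [hL, mul_assoc]
  obtain ⟨R, hR⟩ := hLM L hLmul
  exact ⟨L, R, hR, hL⟩

end IsQuasiCentralizer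

section Centralizers

variable {A : Type*} [NonUnitalNormedRing A] [NormedSpace ℂ A]

theorem RMeqM_of_LMeqM [StarRing A] [StarModule ℂ A] [ContinuousStar A] (hA : LMeqM A) :
    RMeqM A := by
  intro R hR
  let adj (T : A →L[ℂ] A) : A →L[ℂ] A := (star (WithConv.toConv T)).ofConv
  have hadj (T : A →L[ℂ] A) (x : A) : adj T x = star (T (star x)) := rfl
  obtain ⟨S, hS⟩ := hA (adj R) fun x y => by simp only [hadj, hR, star_mul, star_star]
  refine ⟨adj S, fun x y => ?_⟩
  simpa only [hadj, star_mul, star_star] using (congrArg star (hS (star y) (star x))).symm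

theorem LMeqM_of_QMeqM [IsScalarTower ℂ A A] [SMulCommClass ℂ A A] (hA : QMeqM A) :
    LMeqM A := by
  intro L hL
  let m := (ContinuousLinearMap.mul ℂ A).bilinearComp (.id ℂ A) L
  have hmL (x y : A) : m x y = x * L y := rfl
  have hm : IsQuasiCentralizer m := fun a x y b => by simp only [hmL, hL, mul_assoc]
  obtain ⟨L', R, hR, hmL'⟩ := hA m hm
  exact ⟨R, fun x y => (hR x y).trans (hmL' x y).symm⟩

theorem LMeqM_iff_QMeqM_general [IsScalarTower ℂ A A] [SMulCommClass ℂ A A] [CompleteSpace A]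
    [StarRing A] [StarModule ℂ A] [ContinuousStar A] {l : Filter A} (hl : l.IsApproximateUnit)
    {K : ℝ≥0} (hK : ∀ᶠ e in l, ‖e‖ ≤ K) : LMeqM A ↔ QMeqM A :=
  ⟨fun hA _ hm => hm.comesFromMultiplier hl hK hA (RMeqM_of_LMeqM hA), LMeqM_of_QMeqM⟩

end Centralizers

theorem exists_isApproximateUnit_norm_le_one (A : Type*) [NonUnitalCStarAlgebra A] :
    ∃ l : Filter A, l.IsApproximateUnit ∧ ∀ᶠ e in l, ‖e‖ ≤ 1 := by
  let _ := CStarAlgebra.spectralOrder A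
  have := CStarAlgebra.spectralOrderedRing A
  have hu := CStarAlgebra.increasingApproximateUnit A
  exact ⟨_, hu.toIsApproximateUnit, hu.eventually_norm⟩

/-- For any C*-algebra `A`, `LM(A) = M(A)` if and only if `QM(A) = M(A)`:
every bounded left centralizer of `A` is a multiplier iff every quasi-centralizer of `A`
comes from a multiplier. -/
theorem LMeqM_iff_QMeqM {A : Type*} [NonUnitalCStarAlgebra A] :
    (∀ L : A →L[ℂ] A, (∀ x y : A, L (x * y) = L x * y) →
      ∃ R : A →L[ℂ] A, ∀ x y : A, R x * y = x * L y) ↔ QMeqM A := by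
  obtain ⟨l, hl, hnorm⟩ := exists_isApproximateUnit_norm_le_one A
  exact LMeqM_iff_QMeqM_general hl (K := 1) hnorm
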